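/- arXiv:1908.01149 — 3 statements merged into one kernel-verified Lean document; each statement's English description precedes it below -/
import Mathlib

section
/- Let (X,d) be a compact metric space and f : X → X a continuous map with a fixed point p ∈ X (f(p) = p). If the Dirac measure δ_p is the unique f-invariant Borel probability measure on X, then (X,f) has the approximate product property; moreover, in this case every sequence can be traced with all gaps equal to 1, i.e. for all δ₂, ε > 0 there is M > 0 such that for every integer n > M and every sequence (x_k)_{k≥1} in X, ((x_k), (n)_{k≥1}, (1)_{k≥1}) is (δ₂,ε)-traced by p. -/
open MeasureTheory Filter Set

section Defs

variable {X : Type*} [MetricSpace X]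

/-- `segStart m t k` is the time `s_k` at which the `k`-th orbit segment starts
(indexing from `k = 0`): `s_0 = 0`, `s_{k+1} = s_k + m_k + t_k - 1`. -/
def segStart (m t : ℕ → ℕ) (k : ℕ) : ℕ :=
  ∑ i ∈ Finset.range k, (m i + t i - 1)

/-- `(δ, ε)`-tracing of the sequence of orbit segments `(C k, m k)` with gaps `t k`
by the point `z`. -/
def Traced (f : X → X) (C : ℕ → X) (m t : ℕ → ℕ) (δ ε : ℝ) (z : X) : Prop :=
  ∀ k : ℕ,
    (((Finset.range (m k)).filter
      (fun j => ε < dist (f^[segStart m t k + j] z) (f^[j] (C k)))).card : ℝ)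
      ≤ δ * (m k)

/-- The approximate product property. -/
def ApproxProduct (f : X → X) : Prop :=
  ∀ δ₁ δ₂ ε : ℝ, 0 < δ₁ → 0 < δ₂ → 0 < ε →
    ∃ M : ℕ, ∀ n : ℕ, M < n → ∀ C : ℕ → X,
      ∃ t : ℕ → ℕ, (∀ k, 0 < t k) ∧ (∀ k, (t k : ℝ) ≤ 1 + δ₁ * n) ∧
        ∃ z : X, Traced f C (fun _ => n) t δ₂ ε z

/-- The strict approximate product property. -/
def StrictApproxProduct (f : X → X) : Prop :=
  ∀ δ ε : ℝ, 0 < δ → 0 < ε →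
    ∃ M : ℕ, ∀ n : ℕ, M < n → ∀ C : ℕ → X,
      ∃ t : ℕ → ℕ, (∀ k, 0 < t k) ∧ (∀ k, (t k : ℝ) ≤ 1 + δ * n) ∧
        ∃ z : X, Traced f C (fun _ => n) t 0 ε z

/-- Maximal cardinality of an `(n, ε)`-separated subset of `K`. -/
noncomputable def sepNum (f : X → X) (K : Set X) (n : ℕ) (ε : ℝ) : ℕ :=
  sSup {c : ℕ | ∃ S : Finset X, ↑S ⊆ K ∧ S.card = c ∧
    ∀ y ∈ S, ∀ y' ∈ S, y ≠ y' → ∃ j < n, ε < dist (f^[j] y) (f^[j] y')}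

/-- Entropy of `f` on `K` at scale `ε`:
`h(K, f, ε) = limsup_n (1/n) log s(K, n, ε)`. -/
noncomputable def entScale (f : X → X) (K : Set X) (ε : ℝ) : EReal :=
  limsup (fun n : ℕ => ((Real.log (sepNum f K n ε) / n : ℝ) : EReal)) atTop

/-- Bowen's topological entropy `h(f) = lim_{ε → 0} h(X, f, ε)`
(the limit is a supremum by monotonicity in `ε`). -/
noncomputable def topEnt (f : X → X) : EReal :=
  ⨆ (ε : ℝ) (_ : (0:ℝ) < ε), entScale f Set.univ ε

/-- Unique ergodicity: there is exactly one `f`-invariant Borel probability measure. -/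
def UniquelyErgodic [MeasurableSpace X] (f : X → X) : Prop :=
  ∃! μ : Measure X, IsProbabilityMeasure μ ∧ Measure.map f μ = μ

/-- Minimality: every orbit is dense. -/
def MinimalSystem (f : X → X) : Prop :=
  ∀ x : X, Dense (Set.range fun n => f^[n] x)


/-!
The empirical measures of orbit segments of length `n → ∞` accumulate, by weak-* compactness, only
at invariant probability measures. If there is only one such measure `μ`, the Birkhoff averages of
every continuous function therefore converge to its `μ`-integral, uniformly in the starting point.
For `μ = δ_p` and the function `dist p`, the averages tend to `0`, and by Markov's inequality every
long orbit segment spends only a small proportion of its time away from `p`.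
-/

open scoped Topology BoundedContinuousFunction

section BirkhoffAverage

variable {α : Type*} {f : α → α} {g : α → ℝ}

theorem mul_card_filter_lt_le_birkhoffSum (hg : ∀ x, 0 ≤ g x) (f : α → α) (ε : ℝ) (n : ℕ) (x : α) :
    ε * ((Finset.range n).filter (fun j => ε < g (f^[j] x))).card ≤ birkhoffSum f g n x := by
  set visits := (Finset.range n).filter (fun j => ε < g (f^[j] x))
  calc
    ε * visits.card = ∑ _j ∈ visits, ε := by rw [Finset.sum_const, nsmul_eq_mul, mul_comm]
    _ ≤ ∑ j ∈ visits, g (f^[j] x) :=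
      Finset.sum_le_sum fun j hj => (Finset.mem_filter.1 hj).2.le
    _ ≤ birkhoffSum f g n x :=
      Finset.sum_le_sum_of_subset_of_nonneg (Finset.filter_subset _ _) fun _ _ _ => hg _

theorem eventually_card_filter_lt_le_of_tendstoUniformly_birkhoffAverage (hg : ∀ x, 0 ≤ g x)
    (havg : TendstoUniformly (birkhoffAverage ℝ f g) 0 atTop) {δ ε : ℝ} (hδ : 0 < δ) (hε : 0 < ε) :
    ∀ᶠ n : ℕ in atTop, ∀ x,
      (((Finset.range n).filter (fun j => ε < g (f^[j] x))).card : ℝ) ≤ δ * n := by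
  filter_upwards [Metric.tendstoUniformly_iff.1 havg (ε * δ) (mul_pos hε hδ),
    eventually_gt_atTop 0] with n hsmall hn x
  have hn' : (0 : ℝ) < n := Nat.cast_pos.2 hn
  have havg_lt : (n : ℝ)⁻¹ * birkhoffSum f g n x < ε * δ := by
    simpa [birkhoffAverage] using (abs_lt.1 (hsmall x)).1
  refine le_of_mul_le_mul_left ?_ hε
  calc
    ε * ((Finset.range n).filter (fun j => ε < g (f^[j] x))).card ≤ birkhoffSum f g n x :=
      mul_card_filter_lt_le_birkhoffSum hg f ε n x
    _ ≤ n * (ε * δ) := ((inv_mul_lt_iff₀ hn').1 havg_lt).le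
    _ = ε * (δ * n) := by ring

theorem birkhoffAverage_comp_self (R : Type*) {M : Type*} [DivisionSemiring R] [AddCommMonoid M]
    [Module R M] (f : α → α) (g : α → M) (n : ℕ) (x : α) :
    birkhoffAverage R f (g ∘ f) n x = birkhoffAverage R f g n (f x) := by
  simp only [birkhoffAverage, birkhoffSum, Function.comp_apply, ← Function.iterate_succ_apply,
    Function.iterate_succ_apply']

theorem tendsto_birkhoffAverage_comp_self_sub (𝕜 : Type*) {E ι : Type*} [RCLike 𝕜]
    [NormedAddCommGroup E] [NormedSpace 𝕜 E] {g : α → E} (hg : Bornology.IsBounded (range g))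
    (f : α → α) {l : Filter ι} {n : ι → ℕ} (hn : Tendsto n l atTop) (x : ι → α) :
    Tendsto (fun i => birkhoffAverage 𝕜 f (g ∘ f) (n i) (x i) - birkhoffAverage 𝕜 f g (n i) (x i))
      l (𝓝 0) := by
  obtain ⟨C, hC⟩ := Metric.isBounded_range_iff.1 hg
  have hbound : Tendsto (fun i => C / n i) l (𝓝 0) :=
    (tendsto_const_div_atTop_nhds_zero_nat C).comp hn
  refine squeeze_zero_norm (fun i => ?_) hbound
  rw [birkhoffAverage_comp_self, ← dist_eq_norm, dist_birkhoffAverage_apply_birkhoffAverage]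
  gcongr
  exact hC _ _

end BirkhoffAverage

section EmpiricalMeasure

variable {α : Type*} [MeasurableSpace α]

/-- The empirical measure `(1/n) ∑_{j < n} δ_{f^j x}` of the orbit segment of length `n` starting at
`x`. It is a probability measure for `n ≠ 0`, and the zero measure for `n = 0`. -/
noncomputable def empiricalMeasure (f : α → α) (n : ℕ) (x : α) : Measure α :=
  (n : ENNReal)⁻¹ • ∑ j ∈ Finset.range n, Measure.dirac (f^[j] x)

theorem isProbabilityMeasure_empiricalMeasure (f : α → α) {n : ℕ} (hn : n ≠ 0) (x : α) :
    IsProbabilityMeasure (empiricalMeasure f n x) :=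
  ⟨by simp [empiricalMeasure, ENNReal.inv_mul_cancel (Nat.cast_ne_zero.2 hn)]⟩

theorem integral_empiricalMeasure [MeasurableSingletonClass α] {E : Type*} [NormedAddCommGroup E]
    [NormedSpace ℝ E] [CompleteSpace E] (f : α → α) (g : α → E) (n : ℕ) (x : α) :
    ∫ y, g y ∂(empiricalMeasure f n x) = birkhoffAverage ℝ f g n x := by
  rw [empiricalMeasure, integral_smul_measure,
    integral_finsetSum_measure fun j _ => integrable_dirac enorm_lt_top]
  simp [birkhoffAverage, birkhoffSum]

variable [TopologicalSpace α] [BorelSpace α] [HasOuterApproxClosed α]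

theorem map_eq_self_of_tendsto_birkhoffAverage {f : α → α} (hf : Continuous f) {ι : Type*}
    {l : Filter ι} [l.NeBot] {n : ι → ℕ} (hn : Tendsto n l atTop) {x : ι → α} {ν : Measure α}
    [IsFiniteMeasure ν]
    (hν : ∀ g : α →ᵇ ℝ, Tendsto (fun i => birkhoffAverage ℝ f g (n i) (x i)) l
      (𝓝 (∫ y, g y ∂ν))) :
    Measure.map f ν = ν := by
  refine ext_of_forall_integral_eq_of_IsFiniteMeasure fun g => ?_
  rw [integral_map hf.aemeasurable g.continuous.aestronglyMeasurable]
  have hdiff := (hν (g.compContinuous ⟨f, hf⟩)).sub (hν g)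
  have hzero := tendsto_birkhoffAverage_comp_self_sub ℝ g.isBounded_range f hn x
  exact sub_eq_zero.1 (tendsto_nhds_unique hdiff hzero)

variable [CompactSpace α] [T2Space α]

theorem exists_invariant_tendsto_birkhoffAverage {f : α → α} (hf : Continuous f) {ι : Type*}
    (U : Ultrafilter ι) {n : ι → ℕ} (hn : Tendsto n U atTop) (x : ι → α) :
    ∃ ν : Measure α, IsProbabilityMeasure ν ∧ Measure.map f ν = ν ∧
      ∀ g : α →ᵇ ℝ, Tendsto (fun i => birkhoffAverage ℝ f g (n i) (x i)) U
        (𝓝 (∫ y, g y ∂ν)) := by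
  have hprob : ∀ᶠ i in U, ∃ P : ProbabilityMeasure α,
      (P : Measure α) = empiricalMeasure f (n i) (x i) :=
    (hn.eventually_ne_atTop 0).mono fun i hi =>
      ⟨⟨_, isProbabilityMeasure_empiricalMeasure f hi (x i)⟩, rfl⟩
  obtain ⟨P, hP⟩ := hprob.choice
  obtain ⟨ν, -, hPν⟩ := isCompact_univ.ultrafilter_le_nhds (U.map P) (by simp)
  have hlim : ∀ g : α →ᵇ ℝ, Tendsto (fun i => birkhoffAverage ℝ f g (n i) (x i)) U
      (𝓝 (∫ y, g y ∂(ν : Measure α))) := fun g =>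
    (ProbabilityMeasure.tendsto_iff_forall_integral_tendsto.1 hPν g).congr'
      (hP.mono fun i hi => by rw [hi, integral_empiricalMeasure])
  exact ⟨ν, inferInstance, map_eq_self_of_tendsto_birkhoffAverage hf hn hlim, hlim⟩

theorem tendstoUniformly_birkhoffAverage_of_unique_invariant {f : α → α} (hf : Continuous f)
    {μ : Measure α}
    (huniq : ∀ ν : Measure α, IsProbabilityMeasure ν → Measure.map f ν = ν → ν = μ)
    {g : α → ℝ} (hg : Continuous g) :
    TendstoUniformly (birkhoffAverage ℝ f g) (fun _ => ∫ y, g y ∂μ) atTop := by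
  -- Uniform convergence is convergence along every ultrafilter on pairs (time, starting point)
  -- whose time coordinate tends to infinity.
  rw [tendstoUniformly_iff_tendsto, ← Uniform.tendsto_nhds_right, tendsto_iff_ultrafilter]
  intro U hU
  obtain ⟨ν, hν, hinv, hlim⟩ := exists_invariant_tendsto_birkhoffAverage hf U
    (tendsto_fst.mono_left hU) Prod.snd
  rw [← huniq ν hν hinv]
  exact hlim (BoundedContinuousFunction.mkOfCompact ⟨g, hg⟩)

end EmpiricalMeasure

section Tracing

variable {f : X → X}

theorem traced_iff_of_isFixedPt {p : X} (hp : Function.IsFixedPt f p) (C : ℕ → X) (m t : ℕ → ℕ)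
    (δ ε : ℝ) :
    Traced f C m t δ ε p ↔ ∀ k,
      (((Finset.range (m k)).filter (fun j => ε < dist p (f^[j] (C k)))).card : ℝ) ≤ δ * m k := by
  simp only [Traced, Function.iterate_fixed hp]

theorem approxProduct_of_unit_gaps
    (h : ∀ δ ε : ℝ, 0 < δ → 0 < ε → ∃ M : ℕ, ∀ n : ℕ, M < n → ∀ C : ℕ → X,
      ∃ z, Traced f C (fun _ => n) (fun _ => 1) δ ε z) :
    ApproxProduct f := by
  intro δ₁ δ₂ ε hδ₁ hδ₂ hε
  obtain ⟨M, hM⟩ := h δ₂ ε hδ₂ hε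
  refine ⟨M, fun n hn C => ⟨fun _ => 1, fun _ => one_pos, fun _ => ?_, hM n hn C⟩⟩
  rw [Nat.cast_one]
  exact le_add_of_nonneg_right (by positivity)

end Tracing

/-- If the compact system `(X, f)` has a fixed point `p` whose Dirac measure is the
unique `f`-invariant Borel probability measure, then `(X, f)` has the approximate
product property; moreover every sequence can be traced by `p` itself, with all
gaps equal to `1`. -/
theorem app_of_dirac_uniquelyErgodic_fixed_point
    {X : Type*} [MetricSpace X] [CompactSpace X] [MeasurableSpace X] [BorelSpace X]
    (f : X → X) (hf : Continuous f) (p : X) (hp : f p = p)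
    (huniq : ∀ μ : Measure X, IsProbabilityMeasure μ → Measure.map f μ = μ →
      μ = Measure.dirac p) :
    ApproxProduct f ∧
      ∀ δ₂ ε : ℝ, 0 < δ₂ → 0 < ε → ∃ M : ℕ, ∀ n : ℕ, M < n → ∀ C : ℕ → X,
        Traced f C (fun _ => n) (fun _ => 1) δ₂ ε p := by
  have havg : TendstoUniformly (birkhoffAverage ℝ f (dist p)) 0 atTop := by
    simpa [Pi.zero_def] using tendstoUniformly_birkhoffAverage_of_unique_invariant hf huniq
      (continuous_const.dist continuous_id : Continuous (dist p))
  have htraced : ∀ δ₂ ε : ℝ, 0 < δ₂ → 0 < ε → ∃ M : ℕ, ∀ n : ℕ, M < n → ∀ C : ℕ → X,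
      Traced f C (fun _ => n) (fun _ => 1) δ₂ ε p := by
    intro δ₂ ε hδ₂ hε
    obtain ⟨M, hM⟩ := eventually_atTop.1
      (eventually_card_filter_lt_le_of_tendstoUniformly_birkhoffAverage (fun _ => dist_nonneg)
        havg hδ₂ hε)
    exact ⟨M, fun n hn C =>
      (traced_iff_of_isFixedPt hp C _ _ δ₂ ε).2 fun k => hM n hn.le (C k)⟩
  refine ⟨approxProduct_of_unit_gaps fun δ ε hδ hε => ?_, htraced⟩
  exact (htraced δ ε hδ hε).imp fun M hM n hn C => ⟨p, hM n hn C⟩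
end Defs
end

section
/- Let I = [a,b] be a compact interval of real numbers with a < b, and let f : I → I be a continuous map. Then (I,f) cannot simultaneously have the strict approximate product property and zero topological entropy. -/
open MeasureTheory Filter Set

/-!
A failure of minimality forces positive entropy. If the orbit of `p` stays away from `q`, the strict
approximate product property yields a point `y` visiting a small ball around `q` with bounded gaps,
and then, for every binary word, a point tracing the concatenation of segments of the orbits of `y`
and `p` that the word prescribes. Two words that differ at position `k` give separated points,
provided the two `k`-th segments overlap enough, that is, the delays accumulated through the gaps
nearly agree at position `k`. Measured in units of `w`, the delay grows by at most one over two
consecutive segments, so words of length `2 * N` produce at most `2 ^ N` coarse delay profiles, and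
some profile is shared by `2 ^ N` words. Hence the entropy is positive. An interval map has a fixed
point, so it is never minimal.
-/

section Delay

variable {t t' : ℕ → ℕ} {w N k : ℕ}

/-- The total delay caused by the first `k` gaps `t i`: the amount by which the `k`-th segment
starts later than it would if all gaps were equal to `1`. -/
def delay (t : ℕ → ℕ) (k : ℕ) : ℕ :=
  ∑ i ∈ Finset.range k, (t i - 1)

theorem delay_zero (t : ℕ → ℕ) : delay t 0 = 0 :=
  Finset.sum_range_zero _

theorem delay_succ (t : ℕ → ℕ) (k : ℕ) : delay t (k + 1) = delay t k + (t k - 1) :=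
  Finset.sum_range_succ _ _

theorem segStart_const (n : ℕ) (ht : ∀ k, 0 < t k) (k : ℕ) :
    segStart (fun _ => n) t k = n * k + delay t k := by
  have gap_eq (i : ℕ) : n + t i - 1 = n + (t i - 1) := Nat.add_sub_assoc (ht i) n
  simp only [segStart, delay, gap_eq, Finset.sum_add_distrib, Finset.sum_const, Finset.card_range,
    smul_eq_mul, mul_comm]

theorem delay_le_mul (ht : ∀ k, t k - 1 ≤ w) (k : ℕ) : delay t k ≤ k * w := by
  simpa only [delay, Finset.card_range, smul_eq_mul] using
    Finset.sum_le_card_nsmul (Finset.range k) (fun i => t i - 1) w fun i _ => ht i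

/-- The coarse profile of the delays caused by `t` over `2 * N` segments: the set of those pairs of
consecutive gaps `t (2 * i)`, `t (2 * i + 1)` during which the delay crosses a multiple of `w`. -/
def delayProfile (w : ℕ) (t : ℕ → ℕ) (N : ℕ) : Finset ℕ :=
  {i ∈ Finset.range N | delay t (2 * (i + 1)) / w ≠ delay t (2 * i) / w}

theorem delayProfile_subset_range (w : ℕ) (t : ℕ → ℕ) (N : ℕ) :
    delayProfile w t N ⊆ Finset.range N :=
  Finset.filter_subset _ _

theorem delay_div_two_mul_succ (hw : 0 < w) (ht : ∀ k, 2 * (t k - 1) ≤ w) (i : ℕ) :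
    delay t (2 * (i + 1)) / w = delay t (2 * i) / w ∨
      delay t (2 * (i + 1)) / w = delay t (2 * i) / w + 1 := by
  have two_gaps :
      delay t (2 * (i + 1)) = delay t (2 * i) + (t (2 * i) - 1) + (t (2 * i + 1) - 1) := by
    rw [mul_add_one, delay_succ, delay_succ]
  have lower : delay t (2 * i) / w ≤ delay t (2 * (i + 1)) / w :=
    Nat.div_le_div_right (by omega)
  have upper : delay t (2 * (i + 1)) / w ≤ delay t (2 * i) / w + 1 := by
    rw [← Nat.add_div_right _ hw]
    have := ht (2 * i)
    have := ht (2 * i + 1)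
    exact Nat.div_le_div_right (by omega)
  omega

theorem delay_div_eq_of_delayProfile_eq (hw : 0 < w) (ht : ∀ k, 2 * (t k - 1) ≤ w)
    (ht' : ∀ k, 2 * (t' k - 1) ≤ w) (h : delayProfile w t N = delayProfile w t' N) {i : ℕ}
    (hi : i ≤ N) : delay t (2 * i) / w = delay t' (2 * i) / w := by
  induction i with
  | zero => rw [mul_zero, delay_zero, delay_zero]
  | succ i ih =>
    have ih := ih (by omega)
    have same_jump := Finset.ext_iff.mp h i
    simp only [delayProfile, Finset.mem_filter, Finset.mem_range, Nat.lt_of_succ_le hi, true_and]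
      at same_jump
    have := delay_div_two_mul_succ hw ht i
    have := delay_div_two_mul_succ hw ht' i
    omega

theorem delay_lt_of_delayProfile_eq (hw : 0 < w) (ht : ∀ k, 2 * (t k - 1) ≤ w)
    (ht' : ∀ k, 2 * (t' k - 1) ≤ w) (h : delayProfile w t N = delayProfile w t' N)
    (hk : k < 2 * N) : delay t k < delay t' k + 2 * w := by
  obtain ⟨i, hi⟩ := Nat.even_or_odd' k
  have even_index : delay t (2 * i) < delay t' (2 * i) + w := by
    have same_div := delay_div_eq_of_delayProfile_eq hw ht ht' h (i := i) (by omega)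
    calc delay t (2 * i)
        < w * (delay t (2 * i) / w) + w := Nat.lt_mul_div_succ _ hw
      _ = w * (delay t' (2 * i) / w) + w := by rw [same_div]
      _ ≤ delay t' (2 * i) + w := by gcongr; exact Nat.mul_div_le _ _
  rcases hi with rfl | rfl
  · omega
  · have := ht (2 * i)
    rw [delay_succ, delay_succ]
    omega

end Delay

theorem exists_mem_window_of_strictMono {s : ℕ → ℕ} {B : ℕ} (hs0 : s 0 = 0) (hs : StrictMono s)
    (hB : ∀ k, s (k + 1) ≤ s k + B) (u : ℕ) : ∃ k, u ≤ s k ∧ s k < u + B := by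
  induction u with
  | zero =>
    have : s 0 < s 1 := hs zero_lt_one
    have : s 1 ≤ s 0 + B := hB 0
    exact ⟨0, by omega, by omega⟩
  | succ u ih =>
    obtain ⟨k, hk, hkB⟩ := ih
    rcases hk.eq_or_lt with rfl | hlt
    · have : s k < s (k + 1) := hs k.lt_succ_self
      have := hB k
      exact ⟨k + 1, by omega, by omega⟩
    · exact ⟨k, hlt, by omega⟩

theorem exists_two_pow_le_card_fiber (c : Finset ℕ → Finset ℕ) (N : ℕ)
    (hc : ∀ ω, c ω ⊆ Finset.range N) :
    ∃ d, 2 ^ N ≤ Finset.card {ω ∈ (Finset.range (2 * N)).powerset | c ω = d} := by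
  obtain ⟨d, -, hd⟩ := Finset.exists_le_card_fiber_of_mul_le_card_of_maps_to (f := c) (n := 2 ^ N)
    (s := (Finset.range (2 * N)).powerset) (t := (Finset.range N).powerset)
    (fun ω _ => Finset.mem_powerset.mpr (hc ω)) (Finset.powerset_nonempty _)
    (by simp only [Finset.card_powerset, Finset.card_range, two_mul, pow_add, le_refl])
  exact ⟨d, hd⟩

section Entropy

variable {X : Type*} [MetricSpace X] {f : X → X} {n : ℕ} {ε : ℝ}

/-- The orbits of `y` and `y'` are more than `ε` apart at some time before `n`, so that an
`(n, ε)`-separated set is one whose points are pairwise related by `DynSeparated f n ε`. -/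
def DynSeparated (f : X → X) (n : ℕ) (ε : ℝ) (y y' : X) : Prop :=
  ∃ j < n, ε < dist (f^[j] y) (f^[j] y')

theorem DynSeparated.symm {y y' : X} (h : DynSeparated f n ε y y') : DynSeparated f n ε y' y := by
  simpa only [DynSeparated, dist_comm] using h

theorem DynSeparated.ne {y y' : X} (h : DynSeparated f n ε y y') (hε : 0 ≤ ε) : y ≠ y' := by
  rintro rfl
  obtain ⟨j, -, hj⟩ := h
  exact (hj.trans_eq (dist_self _)).not_ge hε

theorem exists_card_le_of_pairwise_dynSeparated [CompactSpace X] (hf : Continuous f) (n : ℕ)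
    (hε : 0 < ε) :
    ∃ B : ℕ, ∀ S : Finset X, (S : Set X).Pairwise (DynSeparated f n ε) → S.card ≤ B := by
  let orbit (x : X) (j : Fin n) : X := f^[j] x
  have orbit_continuous : Continuous orbit := continuous_pi fun j => hf.iterate j
  obtain ⟨A, hA, hcover⟩ := Metric.totallyBounded_iff.mp
    (isCompact_range orbit_continuous).totallyBounded (ε / 2) (half_pos hε)
  have near (x : X) : ∃ a ∈ A, dist (orbit x) a < ε / 2 := by
    simpa only [mem_iUnion₂, Metric.mem_ball, exists_prop] using hcover (mem_range_self x)
  choose center center_mem dist_center using near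
  refine ⟨hA.toFinset.card, fun S hS => Finset.card_le_card_of_injOn center
    (fun x _ => hA.mem_toFinset.mpr (center_mem x)) fun x hx y hy hxy => ?_⟩
  by_contra hne
  obtain ⟨j, hj, hsep⟩ := hS hx hy hne
  refine hsep.not_ge ?_
  calc dist (f^[j] x) (f^[j] y)
      ≤ dist (orbit x) (orbit y) := dist_le_pi_dist (orbit x) (orbit y) ⟨j, hj⟩
    _ ≤ dist (orbit x) (center x) + dist (orbit y) (center x) := dist_triangle_right _ _ _
    _ ≤ ε / 2 + ε / 2 := add_le_add (dist_center x).le (hxy ▸ dist_center y).le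
    _ = ε := add_halves ε

theorem card_le_sepNum_of_pairwise_dynSeparated [CompactSpace X] (hf : Continuous f) (hε : 0 < ε)
    {ι : Type*} {s : Finset ι} {z : ι → X}
    (hz : (s : Set ι).Pairwise fun i i' => DynSeparated f n ε (z i) (z i')) :
    s.card ≤ sepNum f univ n ε := by
  classical
  have z_injOn : InjOn z s := fun i hi i' hi' h => by
    by_contra hne
    exact (hz hi hi' hne).ne hε.le h
  obtain ⟨B, hB⟩ := exists_card_le_of_pairwise_dynSeparated hf n hε
  rw [← Finset.card_image_of_injOn z_injOn]
  refine le_csSup ⟨B, ?_⟩ ⟨s.image z, subset_univ _, rfl, ?_⟩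
  · rintro _ ⟨S, -, rfl, hS⟩
    exact hB S hS
  · simp only [Finset.forall_mem_image]
    exact fun i hi i' hi' hne => hz hi hi' (ne_of_apply_ne z hne)

theorem topEnt_pos_of_two_pow_le_sepNum {T : ℕ} (hε : 0 < ε) (hT : 0 < T)
    (h : ∀ N, 2 ^ N ≤ sepNum f univ (T * N) ε) : 0 < topEnt f := by
  have rate_pos : 0 < Real.log 2 / T := by positivity
  have growth (N : ℕ) (hN : 0 < N) :
      Real.log 2 / T ≤ Real.log (sepNum f univ (T * N) ε) / (T * N : ℕ) := by
    calc Real.log 2 / T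
        = Real.log (2 ^ N) / (T * N : ℕ) := by
          rw [Real.log_pow]
          push_cast
          field_simp
      _ ≤ Real.log (sepNum f univ (T * N) ε) / (T * N : ℕ) := by
          gcongr
          exact_mod_cast h N
  calc (0 : EReal)
      < (Real.log 2 / T : ℝ) := EReal.coe_pos.mpr rate_pos
    _ ≤ entScale f univ ε := le_limsup_of_frequently_le' <| frequently_atTop.mpr fun m =>
        ⟨T * (m + 1), by nlinarith, EReal.coe_le_coe (growth (m + 1) m.succ_pos)⟩
    _ ≤ topEnt f := le_iSup₂_of_le ε hε le_rfl

end Entropy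

section Tracing

variable {X : Type*} [MetricSpace X] {f : X → X} {ε : ℝ}

theorem Traced.dist_le {C : ℕ → X} {m t : ℕ → ℕ} {z : X} (h : Traced f C m t 0 ε z) {k j : ℕ}
    (hj : j < m k) : dist (f^[segStart m t k + j] z) (f^[j] (C k)) ≤ ε := by
  have no_errors := h k
  rw [zero_mul, Nat.cast_nonpos, Finset.card_eq_zero, Finset.filter_eq_empty_iff] at no_errors
  exact not_lt.mp (no_errors (Finset.mem_range.mpr hj))

theorem Traced.lt_dist_of_lt_dist {C C' : ℕ → X} {m m' t t' : ℕ → ℕ} {z z' : X}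
    (h : Traced f C m t 0 ε z) (h' : Traced f C' m' t' 0 ε z') {k k' j j' : ℕ}
    (hj : j < m k) (hj' : j' < m' k') (hsync : segStart m t k + j = segStart m' t' k' + j')
    (hsep : 3 * ε < dist (f^[j] (C k)) (f^[j'] (C' k'))) :
    ε < dist (f^[segStart m t k + j] z) (f^[segStart m t k + j] z') := by
  have near := h.dist_le hj
  have near' := h'.dist_le hj'
  rw [← hsync] at near'
  rw [dist_comm] at near
  linarith [dist_triangle4 (f^[j] (C k)) (f^[segStart m t k + j] z) (f^[segStart m t k + j] z')
    (f^[j'] (C' k'))]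

theorem StrictApproxProduct.exists_syndetic_visits (hs : StrictApproxProduct f) (q : X)
    (hε : 0 < ε) :
    ∃ (y : X) (L : ℕ), ∀ u, ∃ j, u ≤ j ∧ j < u + L ∧ dist (f^[j] y) q ≤ ε := by
  obtain ⟨M, hM⟩ := hs 1 ε one_pos hε
  obtain ⟨t, t_pos, t_le, y, hy⟩ := hM (M + 1) M.lt_succ_self fun _ => q
  have t_le_nat (k : ℕ) : t k ≤ 1 + (M + 1) := by
    have := t_le k
    rw [one_mul] at this
    exact_mod_cast this
  let start := segStart (fun _ => M + 1) t
  have start_succ (k : ℕ) : start (k + 1) = start k + (M + 1 + t k - 1) :=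
    Finset.sum_range_succ _ _
  have start_strictMono : StrictMono start := strictMono_nat_of_lt_succ fun k => by
    have := start_succ k
    have := t_pos k
    omega
  refine ⟨y, 2 * M + 2, fun u => ?_⟩
  obtain ⟨k, hk, hku⟩ := exists_mem_window_of_strictMono (B := 2 * M + 2)
    (Finset.sum_range_zero _) start_strictMono
    (fun k => by have := start_succ k; have := t_le_nat k; omega) u
  exact ⟨start k, hk, hku, hy.dist_le (j := 0) M.succ_pos⟩

/-- `z` traces, with gaps `t` of size at most `1 + w / 2`, the segments of length `5 * w` that
start at `y` in the positions belonging to `ω` and at `p` in all others. The binary word is encoded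
as the set `ω` of its positions labelled `y`. The factor `5` is chosen so that a time in
`[2 * w, 3 * w)` of a segment stays inside the segment after any shift by less than `2 * w`. -/
structure TracesWord (f : X → X) (y p : X) (w : ℕ) (ε : ℝ) (ω : Finset ℕ) (t : ℕ → ℕ) (z : X) :
    Prop where
  gap_pos : ∀ k, 0 < t k
  two_mul_gap_le : ∀ k, 2 * (t k - 1) ≤ w
  traced : Traced f (ω.piecewise (fun _ => y) fun _ => p) (fun _ => 5 * w) t 0 ε z

theorem StrictApproxProduct.exists_tracesWord (hs : StrictApproxProduct f) (hε : 0 < ε) :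
    ∃ M : ℕ, ∀ w > M, ∀ (y p : X) (ω : Finset ℕ), ∃ t z, TracesWord f y p w ε ω t z := by
  obtain ⟨M, hM⟩ := hs (1 / 10) ε (by norm_num) hε
  refine ⟨M, fun w hw y p ω => ?_⟩
  obtain ⟨t, t_pos, t_le, z, hz⟩ := hM (5 * w) (by omega) (ω.piecewise (fun _ => y) fun _ => p)
  have two_mul_t_le (k : ℕ) : 2 * t k ≤ 2 + w := by
    have := t_le k
    push_cast at this
    exact_mod_cast (by linarith : (2 * t k : ℝ) ≤ 2 + w)
  exact ⟨t, z, t_pos, fun k => by have := two_mul_t_le k; omega, hz⟩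

variable {y p q : X} {w N : ℕ} {ω ω' : Finset ℕ} {t t' : ℕ → ℕ} {z z' : X}

theorem TracesWord.dynSeparated_of_mem_of_notMem (h : TracesWord f y p w ε ω t z)
    (h' : TracesWord f y p w ε ω' t' z')
    (hprofile : delayProfile w t N = delayProfile w t' N)
    (hp : ∀ i, 4 * ε < dist (f^[i] p) q)
    (hy : ∃ j, 2 * w ≤ j ∧ j < 3 * w ∧ dist (f^[j] y) q ≤ ε)
    {k : ℕ} (hk : k < 2 * N) (hkω : k ∈ ω) (hkω' : k ∉ ω') :
    DynSeparated f (12 * w * N) ε z z' := by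
  obtain ⟨j, hj, hj', hyq⟩ := hy
  have hw : 0 < w := by omega
  have lag := delay_lt_of_delayProfile_eq hw h.two_mul_gap_le h'.two_mul_gap_le hprofile hk
  have lag' := delay_lt_of_delayProfile_eq hw h'.two_mul_gap_le h.two_mul_gap_le hprofile.symm hk
  obtain ⟨i, hi⟩ : ∃ i, delay t k + j = delay t' k + i := Nat.exists_eq_add_of_le (by omega)
  refine ⟨segStart (fun _ => 5 * w) t k + j, ?_,
    h.traced.lt_dist_of_lt_dist h'.traced (k' := k) (j' := i) ?_ ?_ ?_ ?_⟩
  · have delay_le : delay t k ≤ k * w :=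
      delay_le_mul (fun k => by have := h.two_mul_gap_le k; omega) k
    rw [segStart_const _ h.gap_pos]
    calc 5 * w * k + delay t k + j
        < 5 * w * k + k * w + 3 * w := by omega
      _ ≤ 6 * w * (k + 1) := by nlinarith
      _ ≤ 6 * w * (2 * N) := Nat.mul_le_mul_left _ hk
      _ = 12 * w * N := by ring
  · omega
  · omega
  · rw [segStart_const _ h.gap_pos, segStart_const _ h'.gap_pos]
    omega
  · rw [Finset.piecewise_eq_of_mem _ _ _ hkω, Finset.piecewise_eq_of_notMem _ _ _ hkω']
    linarith [hp i, dist_triangle_left (f^[i] p) q (f^[j] y)]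

theorem TracesWord.dynSeparated_of_ne (h : TracesWord f y p w ε ω t z)
    (h' : TracesWord f y p w ε ω' t' z')
    (hprofile : delayProfile w t N = delayProfile w t' N)
    (hp : ∀ i, 4 * ε < dist (f^[i] p) q)
    (hy : ∃ j, 2 * w ≤ j ∧ j < 3 * w ∧ dist (f^[j] y) q ≤ ε)
    (hω : ω ⊆ Finset.range (2 * N)) (hω' : ω' ⊆ Finset.range (2 * N)) (hne : ω ≠ ω') :
    DynSeparated f (12 * w * N) ε z z' := by
  obtain ⟨k, hk⟩ := Finset.symmDiff_nonempty.mpr hne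
  rcases Finset.mem_symmDiff.mp hk with ⟨hkω, hkω'⟩ | ⟨hkω', hkω⟩
  · exact h.dynSeparated_of_mem_of_notMem h' hprofile hp hy
      (Finset.mem_range.mp (hω hkω)) hkω hkω'
  · exact (h'.dynSeparated_of_mem_of_notMem h hprofile.symm hp hy
      (Finset.mem_range.mp (hω' hkω')) hkω' hkω).symm

theorem StrictApproxProduct.exists_two_pow_le_sepNum [CompactSpace X] (hf : Continuous f)
    (hs : StrictApproxProduct f) (hε : 0 < ε) (hp : ∀ i, 4 * ε < dist (f^[i] p) q) :
    ∃ T > 0, ∀ N, 2 ^ N ≤ sepNum f univ (T * N) ε := by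
  obtain ⟨y, L, visits⟩ := hs.exists_syndetic_visits q hε
  obtain ⟨M, hM⟩ := hs.exists_tracesWord hε
  let w := M + L + 1
  have visit : ∃ j, 2 * w ≤ j ∧ j < 3 * w ∧ dist (f^[j] y) q ≤ ε := by
    obtain ⟨j, hj, hjL, hjq⟩ := visits (2 * w)
    exact ⟨j, hj, by omega, hjq⟩
  choose t z traces using hM w (by omega) y p
  refine ⟨12 * w, by omega, fun N => ?_⟩
  obtain ⟨d, hd⟩ := exists_two_pow_le_card_fiber (fun ω => delayProfile w (t ω) N) N
    fun ω => delayProfile_subset_range w (t ω) N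
  refine hd.trans (card_le_sepNum_of_pairwise_dynSeparated (z := z) hf hε fun ω hω ω' hω' hne => ?_)
  simp only [Finset.coe_filter, Finset.mem_powerset, mem_ofPred_eq] at hω hω'
  exact (traces ω).dynSeparated_of_ne (traces ω') (hω.2.trans hω'.2.symm) hp visit hω.1 hω'.1 hne

end Tracing

section Minimality

variable {X : Type*} [MetricSpace X] {f : X → X}

theorem exists_le_dist_of_not_minimalSystem (h : ¬MinimalSystem f) :
    ∃ p q : X, ∃ r > 0, ∀ i, r ≤ dist (f^[i] p) q := by
  simpa only [MinimalSystem, Dense, Metric.mem_closure_range_iff, not_forall, not_exists, not_lt,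
    exists_prop, dist_comm] using h

theorem not_minimalSystem_of_isFixedPt [Nontrivial X] {p : X} (hp : Function.IsFixedPt f p) :
    ¬MinimalSystem f := by
  intro h
  obtain ⟨q, hq⟩ := exists_ne p
  have := h p q
  simp only [fun n => (hp.iterate n).eq, range_const, closure_singleton, mem_singleton_iff] at this
  exact hq this

theorem interval_no_sapp_with_zero_entropy_general [CompactSpace X] (hf : Continuous f)
    (hmin : ¬MinimalSystem f) : ¬(StrictApproxProduct f ∧ topEnt f = 0) := by
  rintro ⟨hs, hzero⟩
  obtain ⟨p, q, r, hr, hp⟩ := exists_le_dist_of_not_minimalSystem hmin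
  have hε : 0 < r / 5 := by positivity
  have hfar (i : ℕ) : 4 * (r / 5) < dist (f^[i] p) q := by linarith [hp i]
  obtain ⟨T, hT, growth⟩ := hs.exists_two_pow_le_sepNum hf hε hfar
  exact (topEnt_pos_of_two_pow_le_sepNum hε hT growth).ne' hzero

end Minimality

theorem exists_isFixedPt_of_continuous {α : Type*} [LinearOrder α] [BoundedOrder α]
    [TopologicalSpace α] [OrderClosedTopology α] [PreconnectedSpace α] {f : α → α}
    (hf : Continuous f) : ∃ x, Function.IsFixedPt f x :=
  intermediate_value_univ₂ hf continuous_id le_top bot_le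

theorem not_minimalSystem_Icc {a b : ℝ} (hab : a < b) {f : Icc a b → Icc a b}
    (hf : Continuous f) : ¬MinimalSystem f := by
  have : Fact (a ≤ b) := ⟨hab.le⟩
  have : Nontrivial (Icc a b) := (Icc_infinite hab).nontrivial.coe_sort
  obtain ⟨p, hp⟩ := exists_isFixedPt_of_continuous hf
  exact not_minimalSystem_of_isFixedPt hp

/-- No continuous map of a nondegenerate compact interval has both the strict
approximate product property and zero topological entropy. -/
theorem interval_no_sapp_with_zero_entropy
    (a b : ℝ) (hab : a < b) (f : Set.Icc a b → Set.Icc a b) (hf : Continuous f) :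
    ¬(StrictApproxProduct f ∧ topEnt f = 0) := by
  exact interval_no_sapp_with_zero_entropy_general hf (not_minimalSystem_Icc hab hf)
end

section
/- Let I = [a,b] be a compact interval of real numbers with a < b, and let f : I → I be a continuous map that is topologically transitive and has the approximate product property. Then the topological entropy of (I,f) is strictly positive. -/
open MeasureTheory Filter Set

/-!
Transitivity makes periodic points dense: on an interval `J` without periodic points each `f^[k]`
moves all points in the same direction, while transitivity moves some point of `J` to the right
within `J` after `n` steps and some point to the left after `m` steps, so that `f^[n * m]` would
move points in both directions.

Let `p` be a fixed point and, after reversing the order if `p` is the right endpoint, let `p < x < y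
< c < d` with `x`, `y`, `c`, `d` periodic and `d` not the maximum. An interval with periodic
endpoints covers itself under some `f^[k]`, and since `p` is fixed, its orbit comes near `p` at
times in every residue class modulo `k`. Hence, if the orbit of such an interval visits `w`, then
some iterate of the interval covers all of `[u, w]`, for each `u > p`. So an iterate of `[c, d]`
covers `[x, d]`, and, as the orbit of `[x, y]` visits a point above `d`, an iterate of `[x, y]`
covers `[c, d]`. Combining iterates, `[x, y]` and `[c, d]` form a horseshoe for some `f^[N]`, and
the entropy is at least `log 2 / N`.
-/

open Function Topology

section Coverings

variable {X : Type*} {f : X → X} {A B C : Set X} {m n : ℕ}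

theorem surjOn_iterate_add (hAB : SurjOn f^[m] A B) (hBC : SurjOn f^[n] B C) :
    SurjOn f^[m + n] A C := by
  rw [add_comm, iterate_add]
  exact hBC.comp hAB

theorem surjOn_iterate_mul (hA : SurjOn f^[m] A A) (n : ℕ) : SurjOn f^[m * n] A A := by
  rw [iterate_mul]
  exact hA.iterate n

theorem exists_surjOn_iterate_union (hAB : SurjOn f^[m] A B) (hB : SurjOn f^[n] B (A ∪ B))
    (hn : n ≠ 0) : ∃ N ≠ 0, SurjOn f^[N] A (A ∪ B) ∧ SurjOn f^[N] B (A ∪ B) := by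
  obtain ⟨n, rfl⟩ := Nat.exists_eq_add_one_of_ne_zero hn
  have hBA : SurjOn f^[n + 1] B A := hB.mono Subset.rfl subset_union_left
  have hBB : SurjOn f^[n + 1] B B := hB.mono Subset.rfl subset_union_right
  have hAA : SurjOn f^[m + (n + 1)] A A := surjOn_iterate_add hAB hBA
  refine ⟨(n + 1) * (m + (n + 1)), by positivity, ?_, ?_⟩
  · have hAB' := surjOn_iterate_add (surjOn_iterate_mul hAA n) (surjOn_iterate_add hAB hBB)
    refine .union ?_ ?_
    · exact mul_comm (n + 1) _ ▸ surjOn_iterate_mul hAA (n + 1)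
    · convert hAB' using 2
      ring
  · convert surjOn_iterate_add (surjOn_iterate_mul hBB (m + n)) hB using 2
    ring

end Coverings

section Horseshoes

/-- The sets `H i` form a horseshoe for `g`: they are closed, nonempty and pairwise disjoint, and
`g` maps each of them over all of them. For an iterate `g = f^[N]` this forces positive entropy
of `f`. -/
structure IsHorseshoe {X ι : Type*} [TopologicalSpace X] (g : X → X) (H : ι → Set X) : Prop where
  isClosed : ∀ i, IsClosed (H i)
  nonempty : ∀ i, (H i).Nonempty
  pairwise_disjoint : Pairwise (Disjoint on H)
  surjOn : ∀ i j, SurjOn g (H i) (H j)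

theorem exists_isHorseshoe_iterate {X : Type*} [TopologicalSpace X] {f : X → X} {A B : Set X}
    {m n : ℕ} (hAc : IsClosed A) (hBc : IsClosed B) (hA : A.Nonempty) (hB : B.Nonempty)
    (hAB : Disjoint A B) (hm : SurjOn f^[m] A B) (hn : SurjOn f^[n] B (A ∪ B)) :
    ∃ N ≠ 0, IsHorseshoe f^[N] (fun i : Bool ↦ cond i A B) := by
  have hn0 : n ≠ 0 := by
    rintro rfl
    have hAsubB : A ⊆ B := by simpa [SurjOn] using hn
    exact hA.ne_empty (hAB.eq_bot_of_le hAsubB)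
  obtain ⟨N, hN, hNA, hNB⟩ := exists_surjOn_iterate_union hm hn hn0
  refine ⟨N, hN, Bool.forall_bool.2 ⟨hBc, hAc⟩, Bool.forall_bool.2 ⟨hB, hA⟩,
    pairwise_disjoint_on_bool.2 hAB, ?_⟩
  rintro (_ | _) (_ | _)
  exacts [hNB.mono Subset.rfl subset_union_right, hNB.mono Subset.rfl subset_union_left,
    hNA.mono Subset.rfl subset_union_right, hNA.mono Subset.rfl subset_union_left]

theorem exists_forall_iterate_mem {X ι : Type*} {g : X → X} {H : ι → Set X}
    (hne : ∀ i, (H i).Nonempty) (hsurj : ∀ i j, SurjOn g (H i) (H j)) (n : ℕ) :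
    ∀ w : Fin (n + 1) → ι, ∃ x, ∀ l : Fin (n + 1), g^[l] x ∈ H (w l) := by
  induction n with
  | zero =>
    intro w
    obtain ⟨x, hx⟩ := hne (w 0)
    exact ⟨x, Fin.cases hx fun l ↦ l.elim0⟩
  | succ n ih =>
    intro w
    obtain ⟨y, hy⟩ := ih (Fin.tail w)
    obtain ⟨x, hx, rfl⟩ := hsurj (w 0) (w 1) (hy 0)
    exact ⟨x, Fin.cases hx hy⟩

end Horseshoes

section Entropy

variable {X : Type*} [MetricSpace X] {f : X → X} {K : Set X} {n N : ℕ} {ε : ℝ}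

/-- `(n, ε)`-separated sets, as they enter the definition of `sepNum`. -/
def IsDynSeparated (f : X → X) (n : ℕ) (ε : ℝ) (S : Set X) : Prop :=
  S.Pairwise fun y y' ↦ ∃ j < n, ε < dist (f^[j] y) (f^[j] y')

theorem exists_card_le_of_isDynSeparated [CompactSpace X] (f : X → X) (n : ℕ) (hε : 0 < ε) :
    ∃ C, ∀ S : Finset X, IsDynSeparated f n ε S → S.card ≤ C := by
  let orbit (y : X) : Fin n → X := fun j ↦ f^[j] y
  obtain ⟨t, -, ht, hcover⟩ :=
    (isCompact_univ (X := Fin n → X)).finite_cover_balls (half_pos hε)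
  have hcenter (y : X) : ∃ q ∈ t, dist (orbit y) q < ε / 2 := by
    simpa using hcover (mem_univ (orbit y))
  choose center hmem hdist using hcenter
  refine ⟨ht.toFinset.card, fun S hS ↦
    Finset.card_le_card_of_injOn center (fun y _ ↦ by simpa using hmem y) ?_⟩
  intro y hy y' hy' heq
  by_contra hne
  obtain ⟨j, hj, hlt⟩ := hS hy hy' hne
  have hle : dist (f^[j] y) (f^[j] y') ≤ dist (orbit y) (orbit y') :=
    dist_le_pi_dist (orbit y) (orbit y') ⟨j, hj⟩
  have htri := dist_triangle_right (orbit y) (orbit y') (center y)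
  have hy'_near := heq ▸ hdist y'
  linarith [hdist y]

theorem IsDynSeparated.card_le_sepNum [CompactSpace X] {S : Finset X}
    (hS : IsDynSeparated f n ε S) (hSK : ↑S ⊆ K) (hε : 0 < ε) : S.card ≤ sepNum f K n ε := by
  obtain ⟨C, hC⟩ := exists_card_le_of_isDynSeparated f n hε
  refine le_csSup ⟨C, ?_⟩ ⟨S, hSK, rfl, hS⟩
  rintro _ ⟨T, -, rfl, hT⟩
  exact hC T hT

theorem log_div_le_entScale {c : ℕ} (hc : c ≠ 0) (hN : N ≠ 0)
    (h : ∀ n, c ^ (n + 1) ≤ sepNum f K (N * (n + 1)) ε) :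
    ((Real.log c / N : ℝ) : EReal) ≤ entScale f K ε := by
  refine le_limsup_of_frequently_le' (frequently_atTop.2 fun m ↦
    ⟨N * (m + 1), by nlinarith [Nat.pos_of_ne_zero hN], EReal.coe_le_coe_iff.2 ?_⟩)
  have hN' : (N : ℝ) ≠ 0 := by exact_mod_cast hN
  calc
    Real.log c / N = Real.log ((c : ℝ) ^ (m + 1)) / ↑(N * (m + 1)) := by
      rw [Real.log_pow]
      push_cast
      field_simp
    _ ≤ Real.log (sepNum f K (N * (m + 1)) ε) / ↑(N * (m + 1)) := by
      gcongr
      exact_mod_cast h m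

theorem entScale_le_topEnt (f : X → X) (hε : 0 < ε) : entScale f univ ε ≤ topEnt f :=
  le_iSup₂ (f := fun (ε : ℝ) (_ : 0 < ε) ↦ entScale f univ ε) ε hε

theorem exists_pos_forall_lt_dist {ι : Type*} [Finite ι] {H : ι → Set X}
    (hcomp : ∀ i, IsCompact (H i)) (hdisj : Pairwise (Disjoint on H)) :
    ∃ ε > 0, ∀ i j, i ≠ j → ∀ x ∈ H i, ∀ y ∈ H j, ε < dist x y := by
  have hpair (i j : ι) :
      ∀ᶠ ε : ℝ in 𝓝[>] 0, i ≠ j → ∀ x ∈ H i, ∀ y ∈ H j, ε < dist x y := by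
    by_cases hij : i = j
    · simp [hij]
    obtain ⟨r, hr, hlt⟩ :=
      Metric.exists_pos_forall_lt_edist (hcomp i) (hcomp j).isClosed (hdisj hij)
    filter_upwards [Ioo_mem_nhdsGT (NNReal.coe_pos.2 hr)] with ε hε _ x hx y hy
    have hrxy := hlt x hx y hy
    rw [edist_nndist, ENNReal.coe_lt_coe] at hrxy
    exact hε.2.trans hrxy
  have hall := eventually_all.2 fun i ↦ eventually_all.2 (hpair i)
  obtain ⟨ε, hε, hpos⟩ := (hall.and self_mem_nhdsWithin).exists
  exact ⟨ε, hpos, hε⟩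

variable [CompactSpace X] {ι : Type*} {H : ι → Set X}

theorem card_pow_le_sepNum [Fintype ι] (hN : N ≠ 0) (hne : ∀ i, (H i).Nonempty)
    (hsurj : ∀ i j, SurjOn f^[N] (H i) (H j)) (hε : 0 < ε)
    (hdist : ∀ i j, i ≠ j → ∀ x ∈ H i, ∀ y ∈ H j, ε < dist x y) (n : ℕ) :
    Fintype.card ι ^ (n + 1) ≤ sepNum f univ (N * (n + 1)) ε := by
  choose pt hpt using exists_forall_iterate_mem hne hsurj n
  have hsep {w w' : Fin (n + 1) → ι} (hw : w ≠ w') :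
      ∃ j < N * (n + 1), ε < dist (f^[j] (pt w)) (f^[j] (pt w')) := by
    obtain ⟨l, hl⟩ := Function.ne_iff.1 hw
    refine ⟨N * l, Nat.mul_lt_mul_of_pos_left l.2 (Nat.pos_of_ne_zero hN), ?_⟩
    rw [iterate_mul]
    exact hdist _ _ hl _ (hpt w l) _ (hpt w' l)
  have hinj : Injective pt := by
    intro w w' heq
    by_contra hw
    obtain ⟨j, -, hj⟩ := hsep hw
    rw [heq, dist_self] at hj
    exact hj.not_gt hε
  have hrange : IsDynSeparated f (N * (n + 1)) ε (Finset.univ.map ⟨pt, hinj⟩ : Finset X) := by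
    intro y hy y' hy' hyy'
    obtain ⟨w, rfl⟩ : ∃ w, pt w = y := by simpa using hy
    obtain ⟨w', rfl⟩ : ∃ w', pt w' = y' := by simpa using hy'
    exact hsep (ne_of_apply_ne pt hyy')
  simpa using hrange.card_le_sepNum (subset_univ _) hε

theorem IsHorseshoe.log_card_div_le_topEnt [Fintype ι] [Nonempty ι]
    (h : IsHorseshoe f^[N] H) (hN : N ≠ 0) :
    ((Real.log (Fintype.card ι) / N : ℝ) : EReal) ≤ topEnt f := by
  obtain ⟨ε, hε, hdist⟩ :=
    exists_pos_forall_lt_dist (fun i ↦ (h.isClosed i).isCompact) h.pairwise_disjoint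
  exact (log_div_le_entScale Fintype.card_ne_zero hN
    (card_pow_le_sepNum hN h.nonempty h.surjOn hε hdist)).trans (entScale_le_topEnt f hε)

theorem IsHorseshoe.topEnt_pos [Finite ι] [Nontrivial ι]
    (h : IsHorseshoe f^[N] H) (hN : N ≠ 0) : 0 < topEnt f := by
  have := Fintype.ofFinite ι
  have hlog : 0 < Real.log (Fintype.card ι) :=
    Real.log_pos (by exact_mod_cast Fintype.one_lt_card)
  have hpos : 0 < Real.log (Fintype.card ι) / N := div_pos hlog (by positivity)
  exact (EReal.coe_pos.2 hpos).trans_le (h.log_card_div_le_topEnt hN)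

end Entropy

section Transitivity

/-- Topological transitivity of a self-map: every nonempty open set is visited by the orbit of some
point of every nonempty open set. -/
def IsTopTransitive {X : Type*} [TopologicalSpace X] (f : X → X) : Prop :=
  ∀ U V : Set X, IsOpen U → IsOpen V → U.Nonempty → V.Nonempty →
    ∃ n : ℕ, (f^[n] ⁻¹' U ∩ V).Nonempty

-- A point that comes close enough to the fixed point stays in `U` for the next `n + k` steps, and
-- the times `n, …, n + k` after its arrival meet every residue class modulo `k`.
theorem IsTopTransitive.exists_iterate_add_mul_mem {X : Type*} [TopologicalSpace X] {f : X → X}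
    (hT : IsTopTransitive f) (hf : Continuous f) {p : X} (hp : IsFixedPt f p) {U V : Set X}
    (hU : U ∈ 𝓝 p) (hVo : IsOpen V) (hV : V.Nonempty) {k : ℕ} (hk : k ≠ 0) (n : ℕ) :
    ∃ j, ∃ z ∈ V, f^[n + k * j] z ∈ U := by
  let W : Set X := ⋂ i ∈ Finset.range (n + k + 1), f^[i] ⁻¹' interior U
  have hWo : IsOpen W :=
    isOpen_biInter_finset fun i _ ↦ isOpen_interior.preimage (hf.iterate i)
  have hpW : p ∈ W := by
    refine mem_iInter₂.2 fun i _ ↦ ?_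
    rw [mem_preimage, hp.iterate i]
    exact mem_interior_iff_mem_nhds.2 hU
  obtain ⟨t, z, hzW, hzV⟩ := hT W V hWo hVo ⟨p, hpW⟩ hV
  have hstay : ∀ i < n + k + 1, f^[i] (f^[t] z) ∈ U := fun i hi ↦
    interior_subset (mem_iInter₂.1 hzW i (Finset.mem_range.2 hi))
  have htime : n + k * (t / k + 1) = n + (k - t % k) + t := by
    have hmod := Nat.mod_lt t (Nat.pos_of_ne_zero hk)
    have hdiv := Nat.div_add_mod t k
    rw [Nat.mul_succ]
    omega
  refine ⟨t / k + 1, z, hzV, ?_⟩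
  rw [htime, iterate_add_apply]
  exact hstay _ (by omega)

end Transitivity

section PeriodicPoints

variable {X : Type*} {f g : X → X} {J : Set X} {x y : X} {m n : ℕ}

theorem iterate_ne_of_disjoint_periodicPts (hJ : Disjoint J (periodicPts f)) (hn : n ≠ 0) :
    ∀ w ∈ J, f^[n] w ≠ w := fun _ hw h ↦
  disjoint_left.1 hJ hw (mk_mem_periodicPts (Nat.pos_of_ne_zero hn) h)

variable [TopologicalSpace X] [LinearOrder X] [OrderClosedTopology X]

theorem lt_map_of_lt_map_of_forall_ne (hJ : IsPreconnected J)
    (hg : ContinuousOn g J) (hne : ∀ w ∈ J, g w ≠ w) (hx : x ∈ J) (hy : y ∈ J) (hlt : x < g x) :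
    y < g y := by
  by_contra! hle
  obtain ⟨z, hz, heq⟩ := hJ.intermediate_value₂ hx hy continuousOn_id hg hlt.le hle
  exact hne z hz heq.symm

theorem lt_iterate_mul_of_lt_iterate (hf : Continuous f) (hJ : IsPreconnected J)
    (hper : Disjoint J (periodicPts f)) (hx : x ∈ J) (hxn : f^[n] x ∈ J)
    (hlt : x < f^[n] x) (hm : m ≠ 0) : x < f^[n * m] x := by
  have hn : n ≠ 0 := by
    rintro rfl
    exact hlt.false
  induction m, Nat.one_le_iff_ne_zero.2 hm using Nat.le_induction with
  | base => simpa using hlt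
  | succ m hm' ih =>
    have hm0 : m ≠ 0 := Nat.one_le_iff_ne_zero.1 hm'
    calc
      x < f^[n] x := hlt
      _ < f^[n * m] (f^[n] x) :=
        lt_map_of_lt_map_of_forall_ne hJ (hf.iterate _).continuousOn
          (iterate_ne_of_disjoint_periodicPts hper (mul_ne_zero hn hm0)) hx hxn (ih hm0)
      _ = f^[n * (m + 1)] x := by rw [mul_add_one, iterate_add_apply]

end PeriodicPoints

section OrderedSpaces

variable {X : Type*} [ConditionallyCompleteLinearOrder X] [DenselyOrdered X] [TopologicalSpace X]
  [OrderTopology X] {f : X → X} {p e u x y z : X}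

theorem IsTopTransitive.dense_periodicPts [Nontrivial X] (hT : IsTopTransitive f)
    (hf : Continuous f) : Dense (periodicPts f) := by
  refine dense_of_exists_between fun u v huv ↦ ?_
  by_contra! hnone
  have hper : Disjoint (Ioo u v) (periodicPts f) :=
    disjoint_right.2 fun w hw hwJ ↦ hnone w hw hwJ
  have hJ : IsPreconnected (Ioo u v) := isPreconnected_Ioo
  obtain ⟨w, huw, hwv⟩ := exists_between huv
  have hleft : Ioo u w ⊆ Ioo u v := Ioo_subset_Ioo_right hwv.le
  have hright : Ioo w v ⊆ Ioo u v := Ioo_subset_Ioo_left huw.le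
  obtain ⟨n, x, hxn, hx⟩ := hT (Ioo w v) (Ioo u w) isOpen_Ioo isOpen_Ioo
    (nonempty_Ioo.2 hwv) (nonempty_Ioo.2 huw)
  obtain ⟨m, y, hym, hy⟩ := hT (Ioo u w) (Ioo w v) isOpen_Ioo isOpen_Ioo
    (nonempty_Ioo.2 huw) (nonempty_Ioo.2 hwv)
  have hxlt : x < f^[n] x := hx.2.trans hxn.1
  have hylt : f^[m] y < y := hym.2.trans hy.1
  have hn : n ≠ 0 := by
    rintro rfl
    exact hxlt.false
  have hm : m ≠ 0 := by
    rintro rfl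
    exact hylt.false
  have hxmul : x < f^[n * m] x :=
    lt_iterate_mul_of_lt_iterate hf hJ hper (hleft hx) (hright hxn) hxlt hm
  have hymul : f^[m * n] y < y :=
    lt_iterate_mul_of_lt_iterate (X := Xᵒᵈ) hf hJ hper (hright hy) (hleft hym) hylt hn
  have hymul' : y < f^[n * m] y :=
    lt_map_of_lt_map_of_forall_ne hJ (hf.iterate _).continuousOn
      (iterate_ne_of_disjoint_periodicPts hper (mul_ne_zero hn hm)) (hleft hx) (hright hy) hxmul
  exact lt_asymm hymul (mul_comm n m ▸ hymul')

theorem surjOn_Icc_of_isFixedPt (hf : Continuous f) (hxy : x ≤ y) (hx : IsFixedPt f x)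
    (hy : IsFixedPt f y) : SurjOn f (Icc x y) (Icc x y) :=
  (isPreconnected_Icc.image f hf.continuousOn).Icc_subset ⟨x, left_mem_Icc.2 hxy, hx⟩
    ⟨y, right_mem_Icc.2 hxy, hy⟩

theorem IsTopTransitive.exists_surjOn_Icc (hT : IsTopTransitive f) (hf : Continuous f)
    (hp : IsFixedPt f p) (hx : x ∈ periodicPts f) (hy : y ∈ periodicPts f) (hxy : x < y)
    (hz : z ∈ Icc x y) (hpu : p < u) (n : ℕ) :
    ∃ m, SurjOn f^[m] (Icc x y) (Icc u (f^[n] z)) := by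
  obtain ⟨k, hk, hkx⟩ := hx
  obtain ⟨l, hl, hly⟩ := hy
  have hself : SurjOn f^[k * l] (Icc x y) (Icc x y) :=
    surjOn_Icc_of_isFixedPt (hf.iterate _) hxy.le (hkx.mul_const l) (hly.const_mul k)
  obtain ⟨j, q, hq, hqu⟩ := hT.exists_iterate_add_mul_mem hf hp (Iio_mem_nhds hpu) isOpen_Ioo
    (nonempty_Ioo.2 hxy) (mul_pos hk hl).ne' n
  have hgrow : SurjOn f^[k * l * j + n] (Icc x y) (f^[n] '' Icc x y) :=
    surjOn_iterate_add (surjOn_iterate_mul hself j) (surjOn_image _ _)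
  refine ⟨n + k * l * j, (Icc_subset_Icc_left (le_of_lt hqu)).trans ?_⟩
  refine (isPreconnected_Icc.image _ (hf.iterate _).continuousOn).Icc_subset
    (mem_image_of_mem _ (Ioo_subset_Icc_self hq)) ?_
  rw [add_comm]
  exact hgrow (mem_image_of_mem _ hz)

theorem IsTopTransitive.exists_isHorseshoe_of_isFixedPt_of_lt (hT : IsTopTransitive f)
    (hf : Continuous f) (hp : IsFixedPt f p) (hpe : p < e) :
    ∃ N ≠ 0, ∃ H : Bool → Set X, IsHorseshoe f^[N] H := by
  have : Nontrivial X := ⟨p, e, hpe.ne⟩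
  have hdense := hT.dense_periodicPts hf
  obtain ⟨x, hx, hpx, hxe⟩ := hdense.exists_between hpe
  obtain ⟨y, hy, hxy, hye⟩ := hdense.exists_between hxe
  obtain ⟨c, hc, hyc, hce⟩ := hdense.exists_between hye
  obtain ⟨d, hd, hcd, hde⟩ := hdense.exists_between hce
  obtain ⟨n, hn⟩ := hT.exists_surjOn_Icc hf hp hc hd hcd (right_mem_Icc.2 hcd.le) hpx 0
  obtain ⟨l, z, hdz, hz⟩ := hT (Ioi d) (Ioo x y) isOpen_Ioi isOpen_Ioo ⟨e, hde⟩
    (nonempty_Ioo.2 hxy)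
  obtain ⟨m, hm⟩ := hT.exists_surjOn_Icc hf hp hx hy hxy (Ioo_subset_Icc_self hz)
    (hpx.trans (hxy.trans hyc)) l
  have hdisj : Disjoint (Icc x y) (Icc c d) :=
    disjoint_left.2 fun w hw hw' ↦ (hw.2.trans_lt hyc).not_ge hw'.1
  have hunion : Icc x y ∪ Icc c d ⊆ Icc x d :=
    union_subset (Icc_subset_Icc_right (hyc.trans hcd).le)
      (Icc_subset_Icc_left (hxy.trans hyc).le)
  obtain ⟨N, hN, hH⟩ := exists_isHorseshoe_iterate isClosed_Icc isClosed_Icc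
    (nonempty_Icc.2 hxy.le) (nonempty_Icc.2 hcd.le) hdisj
    (hm.mono Subset.rfl (Icc_subset_Icc_right (le_of_lt hdz))) (hn.mono Subset.rfl hunion)
  exact ⟨N, hN, _, hH⟩

theorem IsTopTransitive.exists_isHorseshoe_of_isFixedPt [Nontrivial X] (hT : IsTopTransitive f)
    (hf : Continuous f) (hp : IsFixedPt f p) :
    ∃ N ≠ 0, ∃ H : Bool → Set X, IsHorseshoe f^[N] H := by
  obtain ⟨e, he⟩ := exists_ne p
  rcases he.lt_or_gt with hep | hpe
  · exact exists_isHorseshoe_of_isFixedPt_of_lt (X := Xᵒᵈ) hT hf hp hep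
  · exact hT.exists_isHorseshoe_of_isFixedPt_of_lt hf hp hpe

end OrderedSpaces

theorem interval_transitive_app_topEnt_pos_general {X : Type*} [CompleteLinearOrder X]
    [DenselyOrdered X] [Nontrivial X] [MetricSpace X] [OrderTopology X] {f : X → X}
    (hf : Continuous f) (hT : IsTopTransitive f) : 0 < topEnt f := by
  obtain ⟨p, -, hp⟩ := exists_mem_Icc_isFixedPt hf.continuousOn bot_le bot_le le_top
  obtain ⟨N, hN, H, hH⟩ := hT.exists_isHorseshoe_of_isFixedPt hf hp
  exact hH.topEnt_pos hN

/-- A topologically transitive continuous map of a nondegenerate compact interval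
with the approximate product property has strictly positive topological entropy. -/
theorem interval_transitive_app_topEnt_pos
    (a b : ℝ) (hab : a < b) (f : Set.Icc a b → Set.Icc a b) (hf : Continuous f)
    (htrans : ∀ U V : Set (Set.Icc a b), IsOpen U → IsOpen V →
      U.Nonempty → V.Nonempty → ∃ n : ℕ, ((f^[n]) ⁻¹' U ∩ V).Nonempty)
    (happ : ApproxProduct f) :
    0 < topEnt f := by
  have : Fact (a ≤ b) := ⟨hab.le⟩
  have : Nontrivial (Icc a b) :=
    nontrivial_coe_sort.2 ⟨a, left_mem_Icc.2 hab.le, b, right_mem_Icc.2 hab.le, hab.ne⟩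
  exact interval_transitive_app_topEnt_pos_general hf htrans
end
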